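/- Let 0 < α < n, 0 ≤ γ ≤ α, 1 < p < n/γ, 1/p − 1/q = γ/n, λ₁, λ₂ > 0. Then the fractional maximal operator M_α is bounded from LM^p(φ_{λ₁}, w_{β₁}^p) to LM^q(φ_{λ₂}, w_{β₂}^q) if and only if β₂ − β₁ − (n−λ₁)/p + (n−λ₂)/q + α = 0 and α ≤ β₁ + (n−λ₁)/p < n. -/

import Mathlib

open MeasureTheory Metric Set ENNReal

noncomputable section

abbrev Euc (n : ℕ) := EuclideanSpace ℝ (Fin n)

/-- Extended-real weighted local Morrey norm (sup over balls centered at the origin). -/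
def lmNormE (n : ℕ) (p : ℝ) (φ : ℝ → ℝ≥0∞) (w : Euc n → ℝ≥0∞) (g : Euc n → ℝ≥0∞) : ℝ≥0∞ :=
  ⨆ (R : ℝ) (_ : 0 < R),
    ((φ R)⁻¹ * ∫⁻ x in ball (0 : Euc n) R, g x ^ p * w x) ^ (1 / p)

def lmNorm (n : ℕ) (p : ℝ) (φ : ℝ → ℝ≥0∞) (w : Euc n → ℝ≥0∞) (f : Euc n → ℝ) : ℝ≥0∞ :=
  lmNormE n p φ w (fun x => ENNReal.ofReal |f x|)

/-- Weak weighted local Morrey norm (for nonnegative extended-real valued functions). -/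
def wlmNormE (n : ℕ) (q : ℝ) (ψ : ℝ → ℝ≥0∞) (v : Euc n → ℝ≥0∞) (g : Euc n → ℝ≥0∞) : ℝ≥0∞ :=
  ⨆ (R : ℝ) (_ : 0 < R) (t : ℝ≥0∞) (_ : 0 < t),
    t * ((ψ R)⁻¹ * ∫⁻ x in {x : Euc n | x ∈ ball (0 : Euc n) R ∧ t < g x}, v x) ^ (1 / q)

def Doubling (φ : ℝ → ℝ≥0∞) : Prop := ∃ C : ℝ≥0∞, C < ⊤ ∧ ∀ R > (0 : ℝ), φ (2 * R) ≤ C * φ R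

def RevDoubling (φ : ℝ → ℝ≥0∞) : Prop :=
  ∃ C : ℝ≥0∞, C < ⊤ ∧ ∀ R > (0 : ℝ), ∀ b ∈ Set.Ioo (0 : ℝ) 1,
    ∑' j : ℕ, φ (b ^ j * R) ≤ C * φ R

/-- The fractional maximal operator `M_α` (the Hardy–Littlewood maximal
operator when `α = 0`). -/
def fracMax (n : ℕ) (α : ℝ) (g : Euc n → ℝ≥0∞) (x : Euc n) : ℝ≥0∞ :=
  ⨆ (c : Euc n) (r : ℝ) (_ : 0 < r ∧ x ∈ ball c r),
    (volume (ball c r)) ^ (α / (n : ℝ) - 1) * ∫⁻ y in ball c r, g y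

/-- The fractional integral (Riesz potential) `I_α`. -/
def fracInt (n : ℕ) (α : ℝ) (g : Euc n → ℝ≥0∞) (x : Euc n) : ℝ≥0∞ :=
  ∫⁻ y, g y * ENNReal.ofReal (‖x - y‖ ^ (α - (n : ℝ)))

/-- The Köthe dual norm of a weighted local Morrey space, evaluated on a
nonnegative (extended-real valued) function. -/
def kdualLM (n : ℕ) (p : ℝ) (φ : ℝ → ℝ≥0∞) (w : Euc n → ℝ≥0∞) (g : Euc n → ℝ≥0∞) : ℝ≥0∞ :=
  ⨆ (f : Euc n → ℝ) (_ : Measurable f ∧ lmNorm n p φ w f ≤ 1),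
    ∫⁻ x, ENNReal.ofReal |f x| * g x

/-- The characteristic function of a ball, as an `ℝ≥0∞` valued function. -/
def chiE (n : ℕ) (c : Euc n) (r : ℝ) : Euc n → ℝ≥0∞ := (ball c r).indicator fun _ => (1 : ℝ≥0∞)

/-- Samko-type Morrey parameter function `φ_λ(B) = r_B ^ λ`. -/
def phiS (lam : ℝ) : ℝ → ℝ≥0∞ := fun R => ENNReal.ofReal (R ^ lam)

/-- Power weight `w_β(x) = |x| ^ β` (raised to the exponent `s`). -/
def powW (n : ℕ) (β s : ℝ) : Euc n → ℝ≥0∞ := fun x => ENNReal.ofReal (‖x‖ ^ (β * s))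

/-- power `t ^ s` as an extended nonnegative real. -/
def TT (s t : ℝ) : ℝ≥0∞ := ENNReal.ofReal (t ^ s)

lemma TT_ne_top (s t : ℝ) : TT s t ≠ ⊤ := ENNReal.ofReal_ne_top

lemma TT_pos (s : ℝ) {t : ℝ} (ht : 0 < t) : 0 < TT s t :=
  ENNReal.ofReal_pos.2 (Real.rpow_pos_of_pos ht s)

lemma TT_ne_zero (s : ℝ) {t : ℝ} (ht : 0 < t) : TT s t ≠ 0 := (TT_pos s ht).ne'

lemma TT_mul (s s' : ℝ) {t : ℝ} (ht : 0 < t) : TT s t * TT s' t = TT (s + s') t := by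
  unfold TT
  rw [← ENNReal.ofReal_mul (by positivity), Real.rpow_add ht]

lemma TT_rpow (s r : ℝ) {t : ℝ} (ht : 0 < t) : TT s t ^ r = TT (s * r) t := by
  unfold TT
  rw [ENNReal.ofReal_rpow_of_pos (by positivity), Real.rpow_mul ht.le]

lemma TT_zero (t : ℝ) : TT 0 t = 1 := by simp [TT]

lemma TT_inv (s : ℝ) {t : ℝ} (ht : 0 < t) : (TT s t)⁻¹ = TT (-s) t := by
  unfold TT
  rw [Real.rpow_neg ht.le, ENNReal.ofReal_inv_of_pos (by positivity)]

lemma TT_mul_base (s : ℝ) {t u : ℝ} (ht : 0 < t) (hu : 0 < u) :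
    TT s (t * u) = TT s t * TT s u := by
  unfold TT
  rw [← ENNReal.ofReal_mul (by positivity), Real.mul_rpow ht.le hu.le]

lemma TT_le (s : ℝ) (hs : 0 ≤ s) {t u : ℝ} (ht : 0 < t) (hu : t ≤ u) : TT s t ≤ TT s u :=
  ENNReal.ofReal_le_ofReal (Real.rpow_le_rpow ht.le hu hs)

lemma TT_le' (s : ℝ) (hs : s ≤ 0) {t u : ℝ} (ht : 0 < t) (hu : t ≤ u) : TT s u ≤ TT s t :=
  ENNReal.ofReal_le_ofReal (Real.rpow_le_rpow_of_nonpos ht hu hs)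

def VV (n : ℕ) : ℝ≥0∞ := volume (ball (0 : Euc n) 1)

lemma VV_pos (n : ℕ) : VV n ≠ 0 := (measure_ball_pos volume _ one_pos).ne'

lemma VV_top (n : ℕ) : VV n ≠ ⊤ := measure_ball_lt_top.ne

lemma vol_ball {n : ℕ} (c : Euc n) {r : ℝ} (hr : 0 < r) :
    volume (ball c r) = TT n r * VV n := by
  rw [Measure.addHaar_ball_of_pos volume c hr]
  simp [TT, VV]

lemma vol_closedBall {n : ℕ} (c : Euc n) {r : ℝ} (hr : 0 < r) :
    volume (closedBall c r) = TT n r * VV n := by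
  rw [Measure.addHaar_closedBall volume c hr.le]
  simp [TT, VV]

lemma vol_ball_rpow {n : ℕ} (c : Euc n) {r : ℝ} (hr : 0 < r) (e : ℝ) :
    volume (ball c r) ^ e = TT (n * e) r * VV n ^ e := by
  rw [vol_ball c hr, ENNReal.mul_rpow_of_ne_top (TT_ne_top _ _) (VV_top n), TT_rpow _ _ hr]

lemma fracMax_gt {n : ℕ} {α : ℝ} {g : Euc n → ℝ≥0∞} {x : Euc n} {s : ℝ≥0∞} :
    s < fracMax n α g x ↔ ∃ (c : Euc n) (r : ℝ), 0 < r ∧ x ∈ ball c r ∧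
      s < (volume (ball c r)) ^ (α / (n : ℝ) - 1) * ∫⁻ y in ball c r, g y := by
  unfold fracMax
  simp only [lt_iSup_iff]
  constructor
  · rintro ⟨c, r, ⟨h1, h2⟩, h⟩; exact ⟨c, r, h1, h2, h⟩
  · rintro ⟨c, r, h1, h2, h⟩; exact ⟨c, r, ⟨h1, h2⟩, h⟩

lemma le_fracMax {n : ℕ} {α : ℝ} {g : Euc n → ℝ≥0∞} {x : Euc n} {c : Euc n} {r : ℝ}
    (hr : 0 < r) (hx : x ∈ ball c r) :
    (volume (ball c r)) ^ (α / (n : ℝ) - 1) * ∫⁻ y in ball c r, g y ≤ fracMax n α g x := by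
  unfold fracMax
  exact le_iSup_of_le c (le_iSup_of_le r (le_iSup_of_le ⟨hr, hx⟩ le_rfl))

lemma fracMax_le {n : ℕ} {α : ℝ} {g : Euc n → ℝ≥0∞} {x : Euc n} {M : ℝ≥0∞}
    (h : ∀ (c : Euc n) (r : ℝ), 0 < r → x ∈ ball c r →
      (volume (ball c r)) ^ (α / (n : ℝ) - 1) * ∫⁻ y in ball c r, g y ≤ M) :
    fracMax n α g x ≤ M := by
  unfold fracMax
  exact iSup_le fun c => iSup_le fun r => iSup_le fun hh => h c r hh.1 hh.2

lemma measurable_fracMax (n : ℕ) (α : ℝ) (g : Euc n → ℝ≥0∞) : Measurable (fracMax n α g) := by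
  apply measurable_of_Ioi
  intro s
  apply IsOpen.measurableSet
  rw [isOpen_iff_mem_nhds]
  intro x hx
  obtain ⟨c, r, hr, hxc, h⟩ := fracMax_gt.1 hx
  filter_upwards [isOpen_ball.mem_nhds hxc] with y hy
  exact fracMax_gt.2 ⟨c, r, hr, hy, h⟩

/-- weak type (1,1). -/
lemma weak_type {n : ℕ} (hn : 0 < n) (g : Euc n → ℝ≥0∞) {s : ℝ} (hs : 0 < s) :
    volume {x | ENNReal.ofReal s < fracMax n 0 g x} ≤
      TT n 5 * (ENNReal.ofReal s)⁻¹ * ∫⁻ y, g y := by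
  have hs0 : ENNReal.ofReal s ≠ 0 := (ENNReal.ofReal_pos.2 hs).ne'
  have hnR : (0:ℝ) < n := by exact_mod_cast hn
  by_cases hI : ∫⁻ y, g y = ⊤
  · rw [hI, ENNReal.mul_top]
    · exact le_top
    · exact mul_ne_zero (TT_ne_zero _ (by norm_num)) (ENNReal.inv_ne_zero.2 ENNReal.ofReal_ne_top)
  let t : Set (Euc n × ℝ) := {z | 0 < z.2 ∧
    ENNReal.ofReal s * volume (ball z.1 z.2) < ∫⁻ y in ball z.1 z.2, g y}
  have hcov : ∀ x, ENNReal.ofReal s < fracMax n 0 g x → ∃ z ∈ t, x ∈ ball z.1 z.2 := by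
    intro x hx
    obtain ⟨c, r, hr, hxc, h⟩ := fracMax_gt.1 hx
    refine ⟨(c, r), ⟨hr, ?_⟩, hxc⟩
    have hv0 : volume (ball c r) ≠ 0 := (measure_ball_pos volume _ hr).ne'
    have hvt : volume (ball c r) ≠ ⊤ := measure_ball_lt_top.ne
    have e : (0:ℝ) / n - 1 = -1 := by simp
    rw [e, ENNReal.rpow_neg_one, mul_comm, ← div_eq_mul_inv,
      ENNReal.lt_div_iff_mul_lt (Or.inl hv0) (Or.inl hvt)] at h
    exact h
  -- radii bounded
  let K : ℝ≥0∞ := (∫⁻ y, g y) / (ENNReal.ofReal s * VV n)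
  have hKtop : K ≠ ⊤ := ENNReal.div_ne_top hI (mul_ne_zero hs0 (VV_pos n))
  have hbd : ∀ z ∈ t, z.2 ≤ K.toReal ^ (1 / (n:ℝ)) := by
    rintro ⟨c, r⟩ ⟨hr, h⟩
    simp only at hr h ⊢
    have h1 : TT n r ≤ K := by
      rw [ENNReal.le_div_iff_mul_le]
      · rw [vol_ball c hr] at h
        calc TT n r * (ENNReal.ofReal s * VV n) = ENNReal.ofReal s * (TT n r * VV n) := by ring
          _ ≤ _ := h.le.trans (setLIntegral_le_lintegral _ _)
      · exact Or.inl (mul_ne_zero hs0 (VV_pos n))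
      · exact Or.inl (ENNReal.mul_ne_top ENNReal.ofReal_ne_top (VV_top n))
    have h2 : r ^ (n:ℝ) ≤ K.toReal := (ENNReal.ofReal_le_iff_le_toReal hKtop).1 h1
    calc r = (r ^ (n:ℝ)) ^ (1 / (n:ℝ)) := by
          rw [← Real.rpow_mul hr.le]; field_simp; simp
      _ ≤ _ := Real.rpow_le_rpow (by positivity) h2 (by positivity)
  obtain ⟨u, hut, hdisj, hu⟩ := Vitali.exists_disjoint_subfamily_covering_enlargement_closedBall
    t (fun z => z.1) (fun z => z.2) _ hbd 5 (by norm_num)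
  have hcount : u.Countable := by
    apply hdisj.countable_of_nonempty_interior
    intro z hz
    refine ⟨z.1, ?_⟩
    exact ball_subset_interior_closedBall (mem_ball_self (hut hz).1)
  have hsub : {x | ENNReal.ofReal s < fracMax n 0 g x} ⊆ ⋃ z ∈ u, closedBall z.1 (5 * z.2) := by
    intro x hx
    obtain ⟨z, hz, hxz⟩ := hcov x hx
    obtain ⟨b, hb, hsb⟩ := hu z hz
    exact mem_biUnion hb (hsb (ball_subset_closedBall hxz))
  have hdisj' : u.PairwiseDisjoint fun z => ball z.1 z.2 :=
    hdisj.mono fun z => ball_subset_closedBall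
  calc volume {x | ENNReal.ofReal s < fracMax n 0 g x}
      ≤ volume (⋃ z ∈ u, closedBall z.1 (5 * z.2)) := measure_mono hsub
    _ ≤ ∑' z : u, volume (closedBall z.1.1 (5 * z.1.2)) := measure_biUnion_le volume hcount _
    _ ≤ ∑' z : u, TT n 5 * (ENNReal.ofReal s)⁻¹ * ∫⁻ y in ball z.1.1 z.1.2, g y := by
        apply ENNReal.tsum_le_tsum
        rintro ⟨z, hz⟩
        obtain ⟨hr, h⟩ := hut hz
        rw [vol_closedBall _ (by positivity), TT_mul_base _ (by norm_num) hr, mul_assoc, mul_assoc,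
          ← vol_ball z.1 hr]
        gcongr
        rw [mul_comm, ← div_eq_mul_inv, ENNReal.le_div_iff_mul_le (Or.inl hs0)
          (Or.inl ENNReal.ofReal_ne_top), mul_comm]
        exact h.le
    _ = TT n 5 * (ENNReal.ofReal s)⁻¹ * ∫⁻ y in ⋃ z ∈ u, ball z.1 z.2, g y := by
        rw [ENNReal.tsum_mul_left, lintegral_biUnion hcount (fun z _ => measurableSet_ball) hdisj']
    _ ≤ _ := mul_le_mul_right (setLIntegral_le_lintegral _ _) _

lemma layer (a : ℝ) (ha : 0 < a) (y : ℝ≥0∞) :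
    ∫⁻ s in Ioi (0:ℝ), {s : ℝ | ENNReal.ofReal s < y}.indicator (fun s => TT (a - 1) s) s =
      ENNReal.ofReal (1 / a) * y ^ a := by
  have key : ∀ b : ℝ, 0 ≤ b → ∫⁻ s in Ioi (0:ℝ), (Iio b).indicator (fun s => TT (a - 1) s) s =
      ENNReal.ofReal (1 / a) * (ENNReal.ofReal b) ^ a := by
    intro b hb
    rw [setLIntegral_indicator measurableSet_Iio, Iio_inter_Ioi]
    have := integral_rpow (a := 0) (b := b) (r := a - 1) (Or.inl (by linarith))
    rw [intervalIntegral.integral_of_le hb, integral_Ioc_eq_integral_Ioo] at this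
    unfold TT
    rw [← ofReal_integral_eq_lintegral_ofReal, this]
    · rw [ENNReal.ofReal_rpow_of_nonneg hb ha.le, ← ENNReal.ofReal_mul (by positivity)]
      congr 1
      simp [Real.zero_rpow ha.ne']
      field_simp
    · have := (intervalIntegral.intervalIntegrable_rpow' (a := 0) (b := b) (r := a - 1)
        (by linarith))
      rw [intervalIntegrable_iff_integrableOn_Ioo_of_le hb] at this
      exact this
    · refine (ae_restrict_iff' measurableSet_Ioo).2 (Filter.Eventually.of_forall ?_)
      intro x hx
      exact Real.rpow_nonneg hx.1.le _
  by_cases hy : y = ⊤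
  · subst hy
    rw [ENNReal.top_rpow_of_pos ha, ENNReal.mul_top (ENNReal.ofReal_pos.2 (by positivity)).ne']
    refine ENNReal.eq_top_of_forall_nnreal_le fun r => ?_
    obtain ⟨b, hb, hb2⟩ : ∃ b : ℝ, 0 ≤ b ∧ (r:ℝ) = (1 / a) * b ^ a := by
      refine ⟨(a * r) ^ (1 / a), by positivity, ?_⟩
      rw [← Real.rpow_mul (by positivity)]
      field_simp
      simp
    calc (r:ℝ≥0∞) = ENNReal.ofReal (1 / a) * (ENNReal.ofReal b) ^ a := by
          rw [ENNReal.ofReal_rpow_of_nonneg hb ha.le, ← ENNReal.ofReal_mul (by positivity), ← hb2]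
          simp
      _ = _ := (key b hb).symm
      _ ≤ _ := by
          apply lintegral_mono
          intro s
          apply indicator_le_indicator_of_subset
          · intro s _; simp
          · intro s; exact zero_le
  · rw [← ENNReal.ofReal_toReal hy, ← key _ ENNReal.toReal_nonneg]
    apply setLIntegral_congr_fun measurableSet_Ioi
    intro s hs
    have : {s : ℝ | ENNReal.ofReal s < ENNReal.ofReal y.toReal}.indicator (fun s => TT (a - 1) s) s
      = (Iio y.toReal).indicator (fun s => TT (a - 1) s) s := by
      have : s ∈ {s : ℝ | ENNReal.ofReal s < ENNReal.ofReal y.toReal} ↔ s ∈ Iio y.toReal := by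
        simp only [mem_ofPred_eq, mem_Iio]
        rw [ENNReal.ofReal_lt_ofReal_iff_of_nonneg (le_of_lt hs)]
      by_cases h : s ∈ Iio y.toReal
      · rw [indicator_of_mem h, indicator_of_mem (this.2 h)]
      · rw [indicator_of_notMem h, indicator_of_notMem (fun h' => h (this.1 h'))]
    exact this

lemma fracMax_split {n : ℕ} (hn : 0 < n) (g : Euc n → ℝ≥0∞) (hg : Measurable g) (s : ℝ)
    (hs : 0 < s) :
    {x | ENNReal.ofReal s < fracMax n 0 g x} ⊆ {x | ENNReal.ofReal (s / 2) <
      fracMax n 0 ({y | ENNReal.ofReal (s / 2) < g y}.indicator g) x} := by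
  intro x hx
  by_contra hcon
  simp only [mem_ofPred_eq, not_lt] at hcon hx
  refine absurd hx (not_lt.2 ?_)
  apply fracMax_le
  intro c r hr hxc
  have h1 := (le_fracMax (α := 0) (g := ({y | ENNReal.ofReal (s / 2) < g y}.indicator g)) hr hxc).trans hcon
  have hv0 : volume (ball c r) ≠ 0 := (measure_ball_pos volume _ hr).ne'
  have hvt : volume (ball c r) ≠ ⊤ := measure_ball_lt_top.ne
  have e : (0:ℝ) / n - 1 = -1 := by simp
  rw [e, ENNReal.rpow_neg_one] at h1 ⊢
  have hm : MeasurableSet {y | ENNReal.ofReal (s / 2) < g y} := measurableSet_lt measurable_const hg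
  calc (volume (ball c r))⁻¹ * ∫⁻ y in ball c r, g y
      ≤ (volume (ball c r))⁻¹ * ∫⁻ y in ball c r,
        ({y | ENNReal.ofReal (s / 2) < g y}.indicator g y + ENNReal.ofReal (s / 2)) := by
        gcongr with y
        by_cases h : y ∈ {y | ENNReal.ofReal (s / 2) < g y}
        · rw [indicator_of_mem h]; exact le_self_add
        · rw [indicator_of_notMem h]; simpa using h
    _ = (volume (ball c r))⁻¹ * (∫⁻ y in ball c r,
        {y | ENNReal.ofReal (s / 2) < g y}.indicator g y) + ENNReal.ofReal (s / 2) := by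
        rw [lintegral_add_right _ measurable_const, setLIntegral_const, mul_add, mul_comm (ENNReal.ofReal (s/2)),
          ← mul_assoc _ (volume _), ENNReal.inv_mul_cancel hv0 hvt, one_mul]
    _ ≤ ENNReal.ofReal (s / 2) + ENNReal.ofReal (s / 2) := add_le_add h1 le_rfl
    _ = _ := by rw [← ENNReal.ofReal_add (by positivity) (by positivity), add_halves]

lemma strong_type {n : ℕ} (hn : 0 < n) (p : ℝ) (hp : 1 < p) : ∃ C : ℝ≥0∞, C ≠ ⊤ ∧
    ∀ g : Euc n → ℝ≥0∞, Measurable g →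
    ∫⁻ x, fracMax n 0 g x ^ p ≤ C * ∫⁻ x, g x ^ p := by
  refine ⟨ENNReal.ofReal p * (TT n 5 * 2 * (ENNReal.ofReal (1 / (p - 1)) * 2 ^ (p - 1))), ?_, ?_⟩
  · have := TT_ne_top n 5
    have : (2:ℝ≥0∞) ^ (p-1) ≠ ⊤ := ENNReal.rpow_ne_top_of_nonneg (by linarith) (by simp)
    finiteness
  intro g hg
  have hp0 : 0 < p := by linarith
  have hMm := measurable_fracMax n 0 g
  have hTT : ∀ a, Measurable (TT a) := fun a => by unfold TT; fun_prop
  have hpinv : ENNReal.ofReal p * ENNReal.ofReal (1 / p) = 1 := by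
    rw [← ENNReal.ofReal_mul hp0.le]; field_simp; simp
  -- layer cake
  have e1 : ∫⁻ x, fracMax n 0 g x ^ p = ENNReal.ofReal p * ∫⁻ s in Ioi (0:ℝ),
      TT (p - 1) s * volume {x | ENNReal.ofReal s < fracMax n 0 g x} := by
    calc ∫⁻ x, fracMax n 0 g x ^ p = ∫⁻ x, ENNReal.ofReal p * ∫⁻ s in Ioi (0:ℝ),
          {s : ℝ | ENNReal.ofReal s < fracMax n 0 g x}.indicator (fun s => TT (p - 1) s) s := by
          congr 1; ext x
          rw [layer p hp0, ← mul_assoc, hpinv, one_mul]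
      _ = ENNReal.ofReal p * ∫⁻ x, ∫⁻ s in Ioi (0:ℝ),
          {s : ℝ | ENNReal.ofReal s < fracMax n 0 g x}.indicator (fun s => TT (p - 1) s) s := by
          rw [lintegral_const_mul' _ _ ENNReal.ofReal_ne_top]
      _ = _ := by
          congr 1
          rw [lintegral_lintegral_swap]
          · congr 1; ext s
            have : ∀ x, {s : ℝ | ENNReal.ofReal s < fracMax n 0 g x}.indicator (fun s => TT (p - 1) s) s
              = {x | ENNReal.ofReal s < fracMax n 0 g x}.indicator (fun _ => TT (p - 1) s) x := by
              intro x; simp [indicator]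
            simp_rw [this]
            rw [lintegral_indicator_const (measurableSet_lt measurable_const hMm)]
          · apply Measurable.aemeasurable
            have : (Function.uncurry fun (x : Euc n) (s : ℝ) => {s : ℝ | ENNReal.ofReal s < fracMax n 0 g x}.indicator (fun s => TT (p - 1) s) s)
              = {z : Euc n × ℝ | ENNReal.ofReal z.2 < fracMax n 0 g z.1}.indicator (fun z => TT (p-1) z.2) := by
              ext z; simp [Function.uncurry, indicator]
            rw [this]
            apply Measurable.indicator
            · exact (hTT _).comp measurable_snd
            · exact measurableSet_lt (ENNReal.measurable_ofReal.comp measurable_snd) (hMm.comp measurable_fst)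
  have e2 : ∫⁻ s in Ioi (0:ℝ),
      TT (p - 1) s * volume {x | ENNReal.ofReal s < fracMax n 0 g x} ≤
      ∫⁻ s in Ioi (0:ℝ), TT n 5 * 2 * ∫⁻ x, {x | ENNReal.ofReal s < 2 * g x}.indicator (fun x => TT (p - 2) s * g x) x := by
    apply setLIntegral_mono' measurableSet_Ioi
    intro s hs
    have hs : 0 < s := hs
    have hset : {y | ENNReal.ofReal (s / 2) < g y} = {x | ENNReal.ofReal s < 2 * g x} := by
      ext y
      simp only [mem_ofPred_eq]
      rw [ENNReal.ofReal_div_of_pos (by norm_num), ENNReal.div_lt_iff (by simp) (by simp), mul_comm]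
      simp
    calc TT (p - 1) s * volume {x | ENNReal.ofReal s < fracMax n 0 g x}
        ≤ TT (p - 1) s * (TT n 5 * (ENNReal.ofReal (s/2))⁻¹ * ∫⁻ y, {y | ENNReal.ofReal (s / 2) < g y}.indicator g y) := by
          gcongr
          exact (measure_mono (fracMax_split hn g hg s hs)).trans (weak_type hn _ (by positivity))
      _ = TT n 5 * 2 * (TT (p - 2) s * ∫⁻ y, {x | ENNReal.ofReal s < 2 * g x}.indicator g y) := by
          rw [hset]
          have : (ENNReal.ofReal (s/2))⁻¹ = 2 * TT (-1) s := by
            rw [← TT_inv _ hs, ENNReal.ofReal_div_of_pos (by norm_num), ENNReal.inv_div (by simp) (by simp), div_eq_mul_inv]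
            simp [TT]
          rw [this, show p - 2 = (p - 1) + (-1) by ring, ← TT_mul _ _ hs]
          ring
      _ = _ := by
          congr 1
          rw [← lintegral_const_mul' _ _ (TT_ne_top _ _)]
          congr 1; ext x
          simp [indicator]
  have e3 : ∫⁻ s in Ioi (0:ℝ), TT n 5 * 2 * ∫⁻ x, {x | ENNReal.ofReal s < 2 * g x}.indicator (fun x => TT (p - 2) s * g x) x
      = TT n 5 * 2 * ∫⁻ x, g x * (ENNReal.ofReal (1 / (p - 1)) * (2 * g x) ^ (p - 1)) := by
    rw [lintegral_const_mul' _ _ (ENNReal.mul_ne_top (TT_ne_top _ _) (by simp))]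
    congr 1
    rw [lintegral_lintegral_swap]
    · congr 1; ext x
      rw [← layer (p - 1) (by linarith), ← lintegral_const_mul]
      · congr 1; ext s
        rw [show p - 1 - 1 = p - 2 by ring]
        simp [indicator, mul_comm]
      · apply Measurable.indicator (hTT _)
        exact measurableSet_lt ENNReal.measurable_ofReal measurable_const
    · apply Measurable.aemeasurable
      have : (Function.uncurry fun (s : ℝ) (x : Euc n) => {x | ENNReal.ofReal s < 2 * g x}.indicator (fun x => TT (p - 2) s * g x) x)
          = {z : ℝ × Euc n | ENNReal.ofReal z.1 < 2 * g z.2}.indicator (fun z => TT (p-2) z.1 * g z.2) := by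
        ext z; simp [Function.uncurry, indicator]
      rw [this]
      have h3 : Measurable fun z : ℝ × Euc n => TT (p - 2) z.1 := (hTT (p-2)).comp measurable_fst
      have h2 : Measurable fun z : ℝ × Euc n => g z.2 := hg.comp measurable_snd
      apply Measurable.indicator
      · exact h3.mul h2
      · exact measurableSet_lt (ENNReal.measurable_ofReal.comp measurable_fst) (h2.const_mul 2)
  rw [e1, mul_assoc]
  gcongr
  refine (e2.trans e3.le).trans (le_of_eq ?_)
  rw [mul_assoc (TT n 5 * 2)]
  congr 1
  rw [← lintegral_const_mul' _ _ (ENNReal.mul_ne_top ENNReal.ofReal_ne_top (ENNReal.rpow_ne_top_of_nonneg (by linarith) (by simp)))]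
  congr 1; ext x
  rw [ENNReal.mul_rpow_of_nonneg _ _ (by linarith : 0 ≤ p - 1)]
  have : g x ^ p = g x * g x ^ (p - 1) := by
    conv_lhs => rw [show p = 1 + (p - 1) by ring]
    rw [ENNReal.rpow_add_of_nonneg _ _ (by norm_num) (by linarith), ENNReal.rpow_one]
  rw [this]; ring

lemma holder_set {n : ℕ} (p : ℝ) (hp : 1 < p) (g : Euc n → ℝ≥0∞) (hg : Measurable g)
    (S : Set (Euc n)) :
    ∫⁻ x in S, g x ≤ (∫⁻ x in S, g x ^ p) ^ (1 / p) * volume S ^ (1 - 1 / p) := by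
  have h := ENNReal.lintegral_mul_le_Lp_mul_Lq (volume.restrict S)
    (Real.HolderConjugate.conjExponent hp) hg.aemeasurable (aemeasurable_const (b := (1:ℝ≥0∞)))
  have e : 1 / p.conjExponent = 1 - 1 / p := by
    unfold Real.conjExponent
    have : p - 1 ≠ 0 := by linarith
    field_simp
  simp only [Pi.mul_apply, mul_one, ENNReal.one_rpow, lintegral_const, one_mul,
    Measure.restrict_apply MeasurableSet.univ, univ_inter] at h
  rw [e] at h
  exact h

lemma hedberg {n : ℕ} (γ p q : ℝ) (hγ : 0 ≤ γ) (hp : 1 < p) (hq : 0 < q)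
    (hpq : 1 / p - 1 / q = γ / n) (g : Euc n → ℝ≥0∞) (hg : Measurable g) (x : Euc n) :
    fracMax n γ g x ≤ fracMax n 0 g x ^ (p / q) * (∫⁻ y, g y ^ p) ^ (γ / n) := by
  have hp0 : 0 < p := by linarith
  have hγn : 0 ≤ γ / n := by positivity
  apply fracMax_le
  intro c r hr hxc
  have hv0 : volume (ball c r) ≠ 0 := (measure_ball_pos volume _ hr).ne'
  have hvt : volume (ball c r) ≠ ⊤ := measure_ball_lt_top.ne
  have h1 := le_fracMax (α := 0) (g := g) hr hxc
  have e : (0:ℝ) / n - 1 = -1 := by simp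
  rw [e] at h1
  have hH := holder_set p hp g hg (ball c r)
  set v := volume (ball c r)
  set I := ∫⁻ y in ball c r, g y
  set G := ∫⁻ y, g y ^ p
  have hI : I ≤ G ^ (1 / p) * v ^ (1 - 1 / p) := by
    refine hH.trans ?_
    gcongr
    exact setLIntegral_le_lintegral _ _
  have hθ : 1 = p / q + p * (γ / n) := by
    rw [← hpq]; field_simp; ring
  have hIe : I = I ^ (p / q) * I ^ (p * (γ / n)) := by
    rw [← ENNReal.rpow_add_of_nonneg _ _ (by positivity) (by positivity), ← hθ, ENNReal.rpow_one]
  calc v ^ (γ / n - 1) * I = v ^ (γ / n - 1) * (I ^ (p / q) * I ^ (p * (γ / n))) := by rw [← hIe]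
    _ ≤ v ^ (γ / n - 1) * (I ^ (p / q) * (G ^ (1 / p) * v ^ (1 - 1 / p)) ^ (p * (γ / n))) := by
        gcongr
    _ = (v ^ (-1:ℝ) * I) ^ (p / q) * G ^ (γ / n) := by
        rw [ENNReal.mul_rpow_of_nonneg _ _ (by positivity : 0 ≤ p * (γ / n)),
          ENNReal.mul_rpow_of_nonneg _ _ (by positivity : 0 ≤ p / q), ← ENNReal.rpow_mul,
          ← ENNReal.rpow_mul, ← ENNReal.rpow_mul]
        have e1 : 1 / p * (p * (γ / n)) = γ / n := by field_simp
        have e2 : -1 * (p / q) = (γ / n - 1) + (1 - 1 / p) * (p * (γ / n)) := by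
          have : (1 - 1 / p) * (p * (γ / n)) = p * (γ / n) - γ / n := by field_simp
          rw [this]; linarith
        rw [e1, e2, ENNReal.rpow_add _ _ hv0 hvt]
        ring
    _ ≤ _ := by gcongr

lemma fracMax_LpLq {n : ℕ} (hn : 0 < n) (γ p q : ℝ) (hγ : 0 ≤ γ) (hp : 1 < p) (hq : 0 < q)
    (hpq : 1 / p - 1 / q = γ / n) : ∃ C : ℝ≥0∞, C ≠ ⊤ ∧ ∀ g : Euc n → ℝ≥0∞, Measurable g →
    ∫⁻ x, fracMax n γ g x ^ q ≤ C * (∫⁻ x, g x ^ p) ^ (q / p) := by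
  obtain ⟨C, hC, h⟩ := strong_type hn p hp
  refine ⟨C, hC, fun g hg => ?_⟩
  have hp0 : 0 < p := by linarith
  have hγn : 0 ≤ γ / n := by positivity
  calc ∫⁻ x, fracMax n γ g x ^ q
      ≤ ∫⁻ x, fracMax n 0 g x ^ p * ((∫⁻ y, g y ^ p) ^ (γ / n)) ^ q := by
        apply lintegral_mono
        intro x
        calc fracMax n γ g x ^ q ≤ (fracMax n 0 g x ^ (p / q) * (∫⁻ y, g y ^ p) ^ (γ / n)) ^ q := by
              gcongr; exact hedberg γ p q hγ hp hq hpq g hg x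
          _ = _ := by
              rw [ENNReal.mul_rpow_of_nonneg _ _ hq.le, ← ENNReal.rpow_mul, div_mul_cancel₀ _ hq.ne']
    _ = (∫⁻ x, fracMax n 0 g x ^ p) * ((∫⁻ y, g y ^ p) ^ (γ / n)) ^ q := by
        rw [lintegral_mul_const _ ((measurable_fracMax n 0 g).pow_const p)]
    _ ≤ C * (∫⁻ x, g x ^ p) * ((∫⁻ y, g y ^ p) ^ (γ / n)) ^ q := by gcongr; exact h g hg
    _ = _ := by
        rw [mul_assoc, ← ENNReal.rpow_mul]
        congr 1
        have : q / p = 1 + γ / n * q := by rw [← hpq]; field_simp; ring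
        rw [this, ENNReal.rpow_add_of_nonneg _ _ (by norm_num) (by positivity), ENNReal.rpow_one]

def Ann (n : ℕ) (t : ℝ) : Set (Euc n) := ball 0 t \ ball 0 (t / 2)

def Wide (n : ℕ) (t : ℝ) : Set (Euc n) := ball 0 (2 * t) \ ball 0 (t / 4)

lemma mem_Ann {n : ℕ} {t : ℝ} {x : Euc n} : x ∈ Ann n t ↔ ‖x‖ < t ∧ t / 2 ≤ ‖x‖ := by
  simp [Ann]

lemma mem_Wide {n : ℕ} {t : ℝ} {x : Euc n} : x ∈ Wide n t ↔ ‖x‖ < 2 * t ∧ t / 4 ≤ ‖x‖ := by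
  simp [Wide]

lemma meas_Ann (n : ℕ) (t : ℝ) : MeasurableSet (Ann n t) := measurableSet_ball.diff measurableSet_ball

lemma meas_Wide (n : ℕ) (t : ℝ) : MeasurableSet (Wide n t) :=
  measurableSet_ball.diff measurableSet_ball

lemma Ann_sub_Wide {n : ℕ} {t : ℝ} (ht : 0 < t) : Ann n t ⊆ Wide n t := by
  intro x hx
  rw [mem_Ann] at hx
  rw [mem_Wide]
  constructor <;> linarith [hx.1, hx.2]

def KK (s : ℝ) : ℝ≥0∞ := TT |s| 4

lemma KK_ne_top (s : ℝ) : KK s ≠ ⊤ := TT_ne_top _ _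

lemma KK_ne_zero (s : ℝ) : KK s ≠ 0 := TT_ne_zero _ (by norm_num)

lemma TT_comp (s : ℝ) {a b : ℝ} (ha : 0 < a) (hb : 0 < b) (hab : a ≤ 4 * b) (hba : b ≤ 4 * a) :
    TT s a ≤ KK s * TT s b := by
  unfold KK
  rcases le_total 0 s with hs | hs
  · rw [abs_of_nonneg hs, ← TT_mul_base _ (by norm_num) hb]
    exact TT_le s hs ha hab
  · rw [abs_of_nonpos hs, ← TT_inv _ (by norm_num), mul_comm, ← div_eq_mul_inv,
      ENNReal.le_div_iff_mul_le (Or.inl (TT_ne_zero _ (by norm_num))) (Or.inl (TT_ne_top _ _)),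
      mul_comm, ← TT_mul_base _ (by norm_num) ha]
    exact TT_le' s hs hb hba

lemma wide_le (s : ℝ) {n : ℕ} {t : ℝ} (ht : 0 < t) {x : Euc n} (hx : x ∈ Wide n t) :
    TT s ‖x‖ ≤ KK s * TT s t := by
  rw [mem_Wide] at hx
  exact TT_comp s (by linarith [hx.2]) ht (by linarith [hx.1]) (by linarith [hx.2])

lemma wide_ge (s : ℝ) {n : ℕ} {t : ℝ} (ht : 0 < t) {x : Euc n} (hx : x ∈ Wide n t) :
    TT s t ≤ KK s * TT s ‖x‖ := by
  rw [mem_Wide] at hx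
  exact TT_comp s ht (by linarith [hx.2]) (by linarith [hx.2]) (by linarith [hx.1])

def VA (n : ℕ) : ℝ≥0∞ := VV n - TT n (1 / 2) * VV n

lemma TT_lt_one (s : ℝ) (hs : 0 < s) : TT s (1 / 2) < 1 := by
  unfold TT
  rw [ENNReal.ofReal_lt_one]
  exact Real.rpow_lt_one (by norm_num) (by norm_num) hs

lemma VA_ne_zero {n : ℕ} (hn : 0 < n) : VA n ≠ 0 := by
  unfold VA
  rw [Ne, tsub_eq_zero_iff_le, not_le]
  calc TT n (1 / 2) * VV n < 1 * VV n :=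
        ENNReal.mul_lt_mul_left (VV_pos n) (VV_top n) (TT_lt_one _ (by exact_mod_cast hn))
    _ = _ := one_mul _

lemma VA_ne_top (n : ℕ) : VA n ≠ ⊤ := ENNReal.sub_ne_top (VV_top n)

lemma vol_Ann {n : ℕ} {t : ℝ} (ht : 0 < t) : volume (Ann n t) = TT n t * VA n := by
  unfold Ann VA
  rw [measure_sdiff (ball_subset_ball (by linarith)) measurableSet_ball.nullMeasurableSet
    measure_ball_lt_top.ne, vol_ball _ ht, vol_ball _ (by positivity : 0 < t / 2),
    ENNReal.mul_sub (fun _ _ => TT_ne_top _ _), show t / 2 = t * (1 / 2) by ring,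
    TT_mul_base _ ht (by norm_num), mul_assoc]

lemma ann_pos {R : ℝ} (hR : 0 < R) (k : ℕ) : 0 < R / 2 ^ k := by positivity

lemma ball_ann {n : ℕ} {R : ℝ} (hR : 0 < R) : ball (0 : Euc n) R \ {0} = ⋃ k : ℕ, Ann n (R / 2 ^ k) := by
  ext x
  simp only [mem_sdiff, mem_ball_zero_iff, mem_singleton_iff, mem_iUnion, mem_Ann]
  constructor
  · rintro ⟨hx, hx0⟩
    have hx0 : 0 < ‖x‖ := norm_pos_iff.2 hx0
    have hex : ∃ k : ℕ, R / 2 ^ k / 2 ≤ ‖x‖ := by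
      obtain ⟨k, hk⟩ := pow_unbounded_of_one_lt (R / ‖x‖) (by norm_num : (1:ℝ) < 2)
      refine ⟨k, ?_⟩
      rw [div_lt_iff₀ hx0] at hk
      rw [div_div, div_le_iff₀ (by positivity)]
      nlinarith [pow_pos (by norm_num : (0:ℝ) < 2) k]
    classical
    refine ⟨Nat.find hex, ?_, Nat.find_spec hex⟩
    rcases h : Nat.find hex with _ | m
    · simpa using hx
    · have := Nat.find_min hex (m := m) (by omega)
      rw [pow_succ, ← div_div]
      exact not_le.1 this
  · rintro ⟨k, h1, h2⟩
    constructor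
    · refine h1.trans_le (div_le_self hR.le (one_le_pow₀ (by norm_num)))
    · rintro rfl
      simp only [norm_zero] at h2
      have := ann_pos hR k
      linarith

lemma ball_sum {n : ℕ} (hn : 0 < n) {R : ℝ} (hR : 0 < R) (g : Euc n → ℝ≥0∞) :
    ∫⁻ x in ball 0 R, g x = ∑' k : ℕ, ∫⁻ x in Ann n (R / 2 ^ k), g x := by
  have : Nonempty (Fin n) := ⟨⟨0, hn⟩⟩
  have h0 : volume ({0} : Set (Euc n)) = 0 := measure_singleton _
  rw [← lintegral_iUnion (fun k => meas_Ann n _), ← ball_ann hR]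
  · exact setLIntegral_congr (sdiff_null_ae_eq_self h0).symm
  · rw [pairwise_disjoint_on]
    intro i j hij
    rw [Set.disjoint_left]
    intro x hi hj
    rw [mem_Ann] at hi hj
    have : R / 2 ^ j ≤ R / 2 ^ i / 2 := by
      rw [div_div, ← pow_succ]
      exact div_le_div_of_nonneg_left hR.le (by positivity) (pow_le_pow_right₀ (by norm_num) hij)
    linarith [hi.2, hj.1]

def CC (s : ℝ) : ℝ≥0∞ := (1 - TT s (1 / 2))⁻¹

lemma CC_ne_top (s : ℝ) (hs : 0 < s) : CC s ≠ ⊤ := by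
  unfold CC
  rw [Ne, ENNReal.inv_eq_top, tsub_eq_zero_iff_le, not_le]
  exact TT_lt_one s hs

lemma geom (s : ℝ) {R : ℝ} (hR : 0 < R) : ∑' k : ℕ, TT s (R / 2 ^ k) = CC s * TT s R := by
  unfold CC
  rw [← ENNReal.tsum_geometric, ← ENNReal.tsum_mul_right]
  congr 1; ext k
  rw [div_eq_mul_inv, TT_mul_base _ hR (by positivity), mul_comm]
  congr 1
  induction k with
  | zero => simp [TT]
  | succ k ih =>
    rw [pow_succ, mul_inv, TT_mul_base _ (by positivity) (by positivity), ih, pow_succ]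
    simp

lemma geom_top (s : ℝ) (hs : s ≤ 0) {R : ℝ} (hR : 0 < R) : ∑' k : ℕ, TT s (R / 2 ^ k) = ⊤ := by
  rw [eq_top_iff, ← ENNReal.tsum_const_eq_top_of_ne_zero (α := ℕ) (TT_ne_zero s hR)]
  apply ENNReal.tsum_le_tsum
  intro k
  exact TT_le' s hs (ann_pos hR k) (div_le_self hR.le (one_le_pow₀ (by norm_num)))

lemma ball_le {n : ℕ} (hn : 0 < n) (s : ℝ) (D : ℝ≥0∞) (g : Euc n → ℝ≥0∞)
    (h : ∀ t : ℝ, 0 < t → ∫⁻ x in Ann n t, g x ≤ D * TT s t) {R : ℝ} (hR : 0 < R) :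
    ∫⁻ x in ball 0 R, g x ≤ D * CC s * TT s R := by
  rw [ball_sum hn hR, mul_assoc, ← geom s hR, ← ENNReal.tsum_mul_left]
  exact ENNReal.tsum_le_tsum fun k => h _ (ann_pos hR k)

lemma H0 {n : ℕ} (p lam1 β1 : ℝ) (hp : 1 < p) (g : Euc n → ℝ≥0∞) {R : ℝ} (hR : 0 < R) :
    ∫⁻ x in ball 0 R, g x ^ p * TT (β1 * p) ‖x‖ ≤
      TT lam1 R * lmNormE n p (phiS lam1) (powW n β1 p) g ^ p := by
  have hp0 : 0 < p := by linarith
  have h : ((phiS lam1 R)⁻¹ * ∫⁻ x in ball (0 : Euc n) R, g x ^ p * powW n β1 p x) ^ (1 / p) ≤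
      lmNormE n p (phiS lam1) (powW n β1 p) g := by
    unfold lmNormE
    exact le_iSup_of_le R (le_iSup_of_le hR le_rfl)
  set N := lmNormE n p (phiS lam1) (powW n β1 p) g
  have h2 := ENNReal.rpow_le_rpow h hp0.le
  rw [← ENNReal.rpow_mul, one_div, inv_mul_cancel₀ hp0.ne', ENNReal.rpow_one, mul_comm,
    ← div_eq_mul_inv] at h2
  have h3 : phiS lam1 R = TT lam1 R := rfl
  rw [h3, ENNReal.div_le_iff (TT_ne_zero _ hR) (TT_ne_top _ _), mul_comm] at h2
  exact h2

lemma H1 {n : ℕ} (p lam1 β1 : ℝ) (hp : 1 < p) : ∃ D : ℝ≥0∞, D ≠ ⊤ ∧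
    ∀ (g : Euc n → ℝ≥0∞) {t : ℝ}, 0 < t →
    ∫⁻ x in Wide n t, g x ^ p ≤
      D * TT (lam1 - β1 * p) t * lmNormE n p (phiS lam1) (powW n β1 p) g ^ p := by
  refine ⟨KK (-(β1 * p)) * TT lam1 2, ENNReal.mul_ne_top (KK_ne_top _) (TT_ne_top _ _), ?_⟩
  intro g t ht
  have h0 := H0 p lam1 β1 hp g (by positivity : 0 < 2 * t)
  set N := lmNormE n p (phiS lam1) (powW n β1 p) g
  calc ∫⁻ x in Wide n t, g x ^ p
      ≤ ∫⁻ x in Wide n t, (KK (-(β1 * p)) * TT (-(β1 * p)) t) * (g x ^ p * TT (β1 * p) ‖x‖) := by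
        apply setLIntegral_mono' (meas_Wide n t)
        intro x hx
        have hx0 : 0 < ‖x‖ := by linarith [(mem_Wide.1 hx).2]
        calc g x ^ p = TT (-(β1 * p)) ‖x‖ * (g x ^ p * TT (β1 * p) ‖x‖) := by
              have : TT (-(β1 * p)) ‖x‖ * TT (β1 * p) ‖x‖ = 1 := by
                rw [TT_mul _ _ hx0]; simp [TT_zero]
              calc g x ^ p = g x ^ p * (TT (-(β1 * p)) ‖x‖ * TT (β1 * p) ‖x‖) := by rw [this, mul_one]
                _ = _ := by ring
          _ ≤ _ := by gcongr; exact wide_le _ ht hx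
    _ = (KK (-(β1 * p)) * TT (-(β1 * p)) t) * ∫⁻ x in Wide n t, (g x ^ p * TT (β1 * p) ‖x‖) :=
        lintegral_const_mul' _ _ (ENNReal.mul_ne_top (KK_ne_top _) (TT_ne_top _ _))
    _ ≤ (KK (-(β1 * p)) * TT (-(β1 * p)) t) * ∫⁻ x in ball 0 (2 * t), (g x ^ p * TT (β1 * p) ‖x‖) :=
        mul_le_mul_right (lintegral_mono_set sdiff_subset) _
    _ ≤ (KK (-(β1 * p)) * TT (-(β1 * p)) t) * (TT lam1 (2 * t) * N ^ p) := by gcongr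
    _ = _ := by
        rw [TT_mul_base _ (by norm_num) ht, sub_eq_add_neg, ← TT_mul _ _ ht]; ring

lemma H2 {n : ℕ} (hn : 0 < n) (p lam1 β1 : ℝ) (hp : 1 < p) (hA : β1 + (n - lam1) / p < n) :
    ∃ D : ℝ≥0∞, D ≠ ⊤ ∧ ∀ (g : Euc n → ℝ≥0∞), Measurable g → ∀ {R : ℝ}, 0 < R →
    ∫⁻ x in ball 0 R, g x ≤
      D * lmNormE n p (phiS lam1) (powW n β1 p) g * TT (n - (β1 + (n - lam1) / p)) R := by
  obtain ⟨D1, hD1, h1⟩ := H1 (n := n) p lam1 β1 hp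
  have hp0 : 0 < p := by linarith
  have hp1 : 0 ≤ 1 - 1 / p := by
    have : 1 / p ≤ 1 := by rw [div_le_one hp0]; exact hp.le
    linarith
  refine ⟨D1 ^ (1 / p) * VA n ^ (1 - 1 / p) * CC (n - (β1 + (n - lam1) / p)), ?_, ?_⟩
  · have := CC_ne_top (n - (β1 + (n - lam1) / p)) (by linarith)
    have h2 := ENNReal.rpow_ne_top_of_nonneg (by positivity : 0 ≤ 1 / p) hD1
    have h3 := ENNReal.rpow_ne_top_of_nonneg hp1 (VA_ne_top n)
    finiteness
  intro g hg R hR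
  have key : ∀ t : ℝ, 0 < t → ∫⁻ x in Ann n t, g x ≤ (D1 ^ (1 / p) * VA n ^ (1 - 1 / p) *
      lmNormE n p (phiS lam1) (powW n β1 p) g) * TT (n - (β1 + (n - lam1) / p)) t := by
    intro t ht
    have h1 := h1 g ht
    set N := lmNormE n p (phiS lam1) (powW n β1 p) g
    calc ∫⁻ x in Ann n t, g x
        ≤ (∫⁻ x in Ann n t, g x ^ p) ^ (1 / p) * volume (Ann n t) ^ (1 - 1 / p) :=
          holder_set p hp g hg _
      _ ≤ (D1 * TT (lam1 - β1 * p) t * N ^ p) ^ (1 / p) * (TT n t * VA n) ^ (1 - 1 / p) := by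
          rw [vol_Ann ht]
          gcongr
          exact (lintegral_mono_set (Ann_sub_Wide ht)).trans h1
      _ = _ := by
          rw [ENNReal.mul_rpow_of_nonneg _ _ (by positivity : 0 ≤ 1 / p),
            ENNReal.mul_rpow_of_nonneg _ _ (by positivity : 0 ≤ 1 / p),
            ENNReal.mul_rpow_of_nonneg _ _ hp1, ← ENNReal.rpow_mul, TT_rpow _ _ ht, TT_rpow _ _ ht,
            mul_one_div_cancel hp0.ne', ENNReal.rpow_one]
          have : n - (β1 + (n - lam1) / p) = (lam1 - β1 * p) * (1 / p) + n * (1 - 1 / p) := by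
            field_simp; ring
          rw [this, ← TT_mul _ _ ht]
          ring
  refine (ball_le hn _ _ g key hR).trans (le_of_eq ?_)
  ring

lemma H3 {n : ℕ} (hn : 0 < n) (α γ : ℝ) (hγα : γ ≤ α) (p lam1 β1 : ℝ) (hp : 1 < p)
    (hA1 : α ≤ β1 + (n - lam1) / p) (hA : β1 + (n - lam1) / p < n) :
    ∃ K1 K2 : ℝ≥0∞, K1 ≠ ⊤ ∧ K2 ≠ ⊤ ∧ ∀ (g : Euc n → ℝ≥0∞), Measurable g → ∀ {t : ℝ}, 0 < t →
    ∀ x ∈ Ann n t, fracMax n α g x ≤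
      K1 * TT (α - γ) t * fracMax n γ ((Wide n t).indicator g) x +
      K2 * lmNormE n p (phiS lam1) (powW n β1 p) g * TT (α - (β1 + (n - lam1) / p)) t := by
  obtain ⟨D2, hD2, h2⟩ := H2 hn p lam1 β1 hp hA
  have hnR : (0:ℝ) < n := by exact_mod_cast hn
  set A := β1 + (n - lam1) / p with hAdef
  refine ⟨VV n ^ ((α - γ) / n), VV n ^ (α / n - 1) * D2 * TT (n - A) 10 * TT (α - A) (1 / 8),
    ENNReal.rpow_ne_top_of_nonneg (div_nonneg (by linarith) hnR.le) (VV_top n), ?_, ?_⟩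
  · have := ENNReal.rpow_ne_top_of_ne_zero (y := α / n - 1) (VV_pos n) (VV_top n)
    have h3 := TT_ne_top (n - A) 10
    have h4 := TT_ne_top (α - A) (1 / 8)
    finiteness
  intro g hg t ht x hx
  have h2 := @h2 g hg
  set N := lmNormE n p (phiS lam1) (powW n β1 p) g
  rw [mem_Ann] at hx
  apply fracMax_le
  intro c r hr hxc
  have hball : ∀ y ∈ ball c r, ‖y‖ < ‖x‖ + 2 * r ∧ ‖x‖ - 2 * r < ‖y‖ := by
    intro y hy
    have hd : ‖x - y‖ < 2 * r := by
      rw [← dist_eq_norm]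
      have := dist_triangle_right x y c
      rw [mem_ball] at hy hxc
      linarith
    have h5 := norm_sub_norm_le x y
    have h6 := norm_sub_norm_le y x
    rw [norm_sub_rev] at h6
    constructor <;> linarith
  rcases le_or_gt r (t / 8) with hrt | hrt
  · refine le_trans ?_ le_self_add
    have hsub : ball c r ⊆ Wide n t := by
      intro y hy
      obtain ⟨h5, h6⟩ := hball y hy
      rw [mem_Wide]
      constructor <;> linarith [hx.1, hx.2]
    have hint : ∫⁻ y in ball c r, g y = ∫⁻ y in ball c r, (Wide n t).indicator g y := by
      apply setLIntegral_congr_fun measurableSet_ball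
      intro y hy
      rw [indicator_of_mem (hsub hy)]
    have hv0 : volume (ball c r) ≠ 0 := (measure_ball_pos volume _ hr).ne'
    have hvt : volume (ball c r) ≠ ⊤ := measure_ball_lt_top.ne
    rw [hint, show α / n - 1 = (α - γ) / n + (γ / n - 1) by field_simp; ring,
      ENNReal.rpow_add _ _ hv0 hvt, mul_assoc]
    refine mul_le_mul' ?_ (le_fracMax hr hxc)
    rw [vol_ball_rpow c hr, mul_div_cancel₀ _ hnR.ne', mul_comm]
    exact mul_le_mul_right (TT_le _ (by linarith) hr (by linarith)) _
  · refine le_trans ?_ le_add_self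
    have hsub : ball c r ⊆ ball 0 (10 * r) := by
      intro y hy
      obtain ⟨h5, h6⟩ := hball y hy
      rw [mem_ball_zero_iff]
      linarith [hx.1, hx.2]
    calc volume (ball c r) ^ (α / n - 1) * ∫⁻ y in ball c r, g y
        ≤ (TT (α - n) r * VV n ^ (α / n - 1)) * (D2 * N * TT (n - A) (10 * r)) := by
          refine mul_le_mul' (le_of_eq ?_) ((lintegral_mono_set hsub).trans (h2 (by positivity)))
          rw [vol_ball_rpow c hr]
          congr 2
          field_simp
      _ = VV n ^ (α / n - 1) * D2 * TT (n - A) 10 * N * TT (α - A) r := by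
          rw [TT_mul_base _ (by norm_num) hr, show α - A = (α - n) + (n - A) by ring,
            ← TT_mul _ _ hr]
          ring
      _ ≤ VV n ^ (α / n - 1) * D2 * TT (n - A) 10 * N * (TT (α - A) (t * (1 / 8))) := by
          gcongr
          exact TT_le' _ (by linarith) (by positivity) (by linarith)
      _ = _ := by
          rw [TT_mul_base _ ht (by norm_num)]; ring

lemma H4 {n : ℕ} (hn : 0 < n) (α γ : ℝ) (hγ : 0 ≤ γ) (hγα : γ ≤ α) (p q lam1 lam2 β1 β2 : ℝ)
    (hp : 1 < p) (hq : 1 ≤ q) (hpq : 1 / p - 1 / q = γ / n)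
    (hrel : β2 - β1 - (n - lam1) / p + (n - lam2) / q + α = 0)
    (hA1 : α ≤ β1 + (n - lam1) / p) (hA : β1 + (n - lam1) / p < n) :
    ∃ D : ℝ≥0∞, D ≠ ⊤ ∧ ∀ (g : Euc n → ℝ≥0∞), Measurable g → ∀ t : ℝ, 0 < t →
    ∫⁻ x in Ann n t, fracMax n α g x ^ q * TT (β2 * q) ‖x‖ ≤
      D * lmNormE n p (phiS lam1) (powW n β1 p) g ^ q * TT lam2 t := by
  have hp0 : 0 < p := by linarith
  have hq0 : 0 < q := by linarith
  have hnR : (0:ℝ) < n := by exact_mod_cast hn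
  obtain ⟨D1, hD1, h1⟩ := H1 (n := n) p lam1 β1 hp
  obtain ⟨K1, K2, hK1, hK2, h3⟩ := H3 hn α γ hγα p lam1 β1 hp hA1 hA
  obtain ⟨C, hC, hL⟩ := fracMax_LpLq hn γ p q hγ hp hq0 hpq
  set A := β1 + (n - lam1) / p with hAdef
  refine ⟨KK (β2 * q) * 2 ^ (q - 1) * (K1 ^ q * (C * D1 ^ (q / p)) + K2 ^ q * VA n), ?_, ?_⟩
  · have i1 := KK_ne_top (β2 * q)
    have i2 := VA_ne_top n
    have i3 := ENNReal.rpow_ne_top_of_nonneg hq0.le hK1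
    have i4 := ENNReal.rpow_ne_top_of_nonneg hq0.le hK2
    have i5 := ENNReal.rpow_ne_top_of_nonneg (by positivity : 0 ≤ q / p) hD1
    have i6 : (2:ℝ≥0∞) ^ (q-1) ≠ ⊤ := ENNReal.rpow_ne_top_of_nonneg (by linarith) (by simp)
    finiteness
  intro g hg t ht
  have h1 := h1 g ht
  have h3 := @h3 g hg t ht
  set N := lmNormE n p (phiS lam1) (powW n β1 p) g
  set F := fracMax n γ ((Wide n t).indicator g) with hF
  have hFm : Measurable F := measurable_fracMax _ _ _
  have hFq : ∫⁻ x in Ann n t, F x ^ q ≤ C * D1 ^ (q / p) * TT ((lam1 - β1 * p) * (q / p)) t * N ^ q := by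
    calc ∫⁻ x in Ann n t, F x ^ q ≤ ∫⁻ x, F x ^ q := setLIntegral_le_lintegral _ _
      _ ≤ C * (∫⁻ x, (Wide n t).indicator g x ^ p) ^ (q / p) := hL _ (hg.indicator (meas_Wide n t))
      _ = C * (∫⁻ x in Wide n t, g x ^ p) ^ (q / p) := by
          congr 2
          rw [← lintegral_indicator (meas_Wide n t)]
          congr 1; ext x
          by_cases hx : x ∈ Wide n t
          · simp [hx]
          · simp [hx, hp0]
      _ ≤ C * (D1 * TT (lam1 - β1 * p) t * N ^ p) ^ (q / p) := by gcongr
      _ = _ := by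
          rw [ENNReal.mul_rpow_of_nonneg _ _ (by positivity : 0 ≤ q / p),
            ENNReal.mul_rpow_of_nonneg _ _ (by positivity : 0 ≤ q / p), TT_rpow _ _ ht,
            ← ENNReal.rpow_mul, mul_div_cancel₀ _ hp0.ne']
          ring
  calc ∫⁻ x in Ann n t, fracMax n α g x ^ q * TT (β2 * q) ‖x‖
      ≤ ∫⁻ x in Ann n t, (KK (β2 * q) * TT (β2 * q) t * 2 ^ (q - 1)) *
          ((K1 * TT (α - γ) t) ^ q * F x ^ q + (K2 * N * TT (α - A) t) ^ q) := by
        apply setLIntegral_mono' (meas_Ann n t)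
        intro x hx
        calc fracMax n α g x ^ q * TT (β2 * q) ‖x‖
            ≤ (K1 * TT (α - γ) t * F x + K2 * N * TT (α - A) t) ^ q *
              (KK (β2 * q) * TT (β2 * q) t) := by
              gcongr
              · exact h3 x hx
              · exact wide_le _ ht (Ann_sub_Wide ht hx)
          _ ≤ (2 ^ (q - 1) * ((K1 * TT (α - γ) t * F x) ^ q + (K2 * N * TT (α - A) t) ^ q)) *
              (KK (β2 * q) * TT (β2 * q) t) := by
              gcongr
              exact ENNReal.rpow_add_le_mul_rpow_add_rpow _ _ hq
          _ = _ := by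
              rw [ENNReal.mul_rpow_of_nonneg _ (F x) hq0.le]; ring
    _ = (KK (β2 * q) * TT (β2 * q) t * 2 ^ (q - 1)) * ((K1 * TT (α - γ) t) ^ q *
          (∫⁻ x in Ann n t, F x ^ q) + (K2 * N * TT (α - A) t) ^ q * (TT n t * VA n)) := by
        have hm : Measurable fun x => F x ^ q := hFm.pow_const q
        rw [lintegral_const_mul _ ((hm.const_mul _).add_const _),
          lintegral_add_right _ measurable_const, lintegral_const_mul _ hm, setLIntegral_const,
          vol_Ann ht]
    _ ≤ (KK (β2 * q) * TT (β2 * q) t * 2 ^ (q - 1)) * ((K1 * TT (α - γ) t) ^ q *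
          (C * D1 ^ (q / p) * TT ((lam1 - β1 * p) * (q / p)) t * N ^ q) +
          (K2 * N * TT (α - A) t) ^ q * (TT n t * VA n)) := by gcongr
    _ = _ := by
        have e1 : TT lam2 t = TT (β2 * q) t * (TT ((α - γ) * q) t * TT ((lam1 - β1 * p) * (q / p)) t) := by
          rw [TT_mul _ _ ht, TT_mul _ _ ht]
          congr 1
          have hγe : γ = n * (1 / p - 1 / q) := by rw [hpq]; field_simp
          rw [hγe]
          field_simp at hrel ⊢
          linear_combination (-1) * hrel
        have e2 : TT lam2 t = TT (β2 * q) t * (TT ((α - A) * q) t * TT n t) := by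
          rw [TT_mul _ _ ht, TT_mul _ _ ht]
          congr 1
          rw [hAdef]
          field_simp at hrel ⊢
          linear_combination (-1) * hrel
        rw [ENNReal.mul_rpow_of_nonneg _ _ hq0.le, ENNReal.mul_rpow_of_nonneg _ _ hq0.le,
          ENNReal.mul_rpow_of_nonneg _ _ hq0.le, TT_rpow _ _ ht, TT_rpow _ _ ht]
        rw [mul_add (KK (β2 * q) * 2 ^ (q - 1)), add_mul _ _ (N ^ q), add_mul _ _ (TT lam2 t)]
        nth_rewrite 1 [e1]
        rw [e2]
        ring

lemma sufficiency {n : ℕ} (hn : 0 < n) (α γ : ℝ) (hγ : 0 ≤ γ) (hγα : γ ≤ α)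
    (p q lam1 lam2 β1 β2 : ℝ) (hlam2 : 0 < lam2)
    (hp : 1 < p) (hq : 1 ≤ q) (hpq : 1 / p - 1 / q = γ / n)
    (hrel : β2 - β1 - (n - lam1) / p + (n - lam2) / q + α = 0)
    (hA1 : α ≤ β1 + (n - lam1) / p) (hA : β1 + (n - lam1) / p < n) :
    ∃ C : ℝ≥0∞, C < ⊤ ∧ ∀ g : Euc n → ℝ≥0∞, Measurable g →
      lmNormE n q (phiS lam2) (powW n β2 q) (fracMax n α g) ≤
        C * lmNormE n p (phiS lam1) (powW n β1 p) g := by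
  obtain ⟨D, hD, h⟩ := H4 hn α γ hγ hγα p q lam1 lam2 β1 β2 hp hq hpq hrel hA1 hA
  have hq0 : 0 < q := by linarith
  refine ⟨(D * CC lam2) ^ (1 / q), ?_, ?_⟩
  · exact (ENNReal.rpow_ne_top_of_nonneg (by positivity)
      (ENNReal.mul_ne_top hD (CC_ne_top _ hlam2))).lt_top
  intro g hg
  have h := h g hg
  set N := lmNormE n p (phiS lam1) (powW n β1 p) g
  unfold lmNormE
  refine iSup_le fun R => iSup_le fun hR => ?_
  have h5 := ball_le hn lam2 _ _ h hR
  calc ((phiS lam2 R)⁻¹ * ∫⁻ x in ball (0 : Euc n) R, fracMax n α g x ^ q * powW n β2 q x) ^ (1 / q)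
      ≤ ((TT lam2 R)⁻¹ * (D * N ^ q * CC lam2 * TT lam2 R)) ^ (1 / q) := by
        gcongr
        · exact le_rfl
        · exact h5
    _ = (D * CC lam2 * N ^ q) ^ (1 / q) := by
        congr 1
        calc _ = ((TT lam2 R)⁻¹ * TT lam2 R) * (D * CC lam2 * N ^ q) := by ring
          _ = _ := by rw [ENNReal.inv_mul_cancel (TT_ne_zero _ hR) (TT_ne_top _ _), one_mul]
    _ = _ := by
        rw [ENNReal.mul_rpow_of_nonneg _ (N ^ q) (by positivity : 0 ≤ 1 / q), ← ENNReal.rpow_mul,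
          mul_one_div_cancel hq0.ne', ENNReal.rpow_one]

lemma ann_upper {n : ℕ} (s : ℝ) {t : ℝ} (ht : 0 < t) :
    ∫⁻ x in Ann n t, TT s ‖x‖ ≤ KK s * VA n * TT (s + n) t := by
  calc ∫⁻ x in Ann n t, TT s ‖x‖ ≤ ∫⁻ x in Ann n t, KK s * TT s t :=
        setLIntegral_mono' (meas_Ann n t) fun x hx => wide_le s ht (Ann_sub_Wide ht hx)
    _ = _ := by
        rw [setLIntegral_const, vol_Ann ht, ← TT_mul _ _ ht]; ring

lemma ann_lower {n : ℕ} (s : ℝ) {t : ℝ} (ht : 0 < t) :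
    VA n * TT (s + n) t ≤ KK s * ∫⁻ x in Ann n t, TT s ‖x‖ := by
  rw [← lintegral_const_mul' _ _ (KK_ne_top s)]
  calc VA n * TT (s + n) t = ∫⁻ x in Ann n t, TT s t := by
        rw [setLIntegral_const, vol_Ann ht, ← TT_mul _ _ ht]; ring
    _ ≤ _ := setLIntegral_mono' (meas_Ann n t) fun x hx => wide_ge s ht (Ann_sub_Wide ht hx)

lemma TT_unbdd (s : ℝ) (hs : 0 < s) (B : ℝ≥0∞) (hB : B ≠ ⊤) (r0 : ℝ) :
    ∃ r : ℝ, r0 < r ∧ 0 < r ∧ B < TT s r := by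
  have h := (tendsto_rpow_atTop hs).eventually_gt_atTop B.toReal
  obtain ⟨r, h1, h2, h3⟩ := (h.and ((Filter.eventually_gt_atTop r0).and
    (Filter.eventually_gt_atTop 0))).exists
  exact ⟨r, h2, h3, (ENNReal.lt_ofReal_iff_toReal_lt hB).2 h1⟩

lemma test_norm {n : ℕ} (hn : 0 < n) (p lam1 β1 : ℝ) (hp : 1 < p) (hlam1 : 0 < lam1) :
    lmNormE n p (phiS lam1) (powW n β1 p) (fun x => TT (-(β1 + (n - lam1) / p)) ‖x‖) < ⊤ := by
  have hp0 : 0 < p := by linarith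
  set A := β1 + (n - lam1) / p with hA
  have key : ∀ t : ℝ, 0 < t → ∫⁻ x in Ann n t, TT (-A) ‖x‖ ^ p * TT (β1 * p) ‖x‖ ≤
      KK (lam1 - n) * VA n * TT lam1 t := by
    intro t ht
    calc ∫⁻ x in Ann n t, TT (-A) ‖x‖ ^ p * TT (β1 * p) ‖x‖ = ∫⁻ x in Ann n t, TT (lam1 - n) ‖x‖ := by
          apply setLIntegral_congr_fun (meas_Ann n t)
          intro x hx
          have hx0 : 0 < ‖x‖ := by linarith [(mem_Ann.1 hx).2]
          show TT (-A) ‖x‖ ^ p * TT (β1 * p) ‖x‖ = TT (lam1 - n) ‖x‖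
          rw [TT_rpow _ _ hx0, TT_mul _ _ hx0]
          congr 1
          rw [hA]; field_simp; ring
      _ ≤ _ := by
          refine (ann_upper _ ht).trans (le_of_eq ?_)
          congr 2; ring
  refine lt_of_le_of_lt ?_ (ENNReal.rpow_ne_top_of_nonneg (by positivity : 0 ≤ 1 / p)
    (ENNReal.mul_ne_top (ENNReal.mul_ne_top (KK_ne_top (lam1 - n)) (VA_ne_top n))
    (CC_ne_top lam1 hlam1))).lt_top
  unfold lmNormE
  refine iSup_le fun R => iSup_le fun hR => ?_
  apply ENNReal.rpow_le_rpow _ (by positivity)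
  calc (phiS lam1 R)⁻¹ * ∫⁻ x in ball (0 : Euc n) R, TT (-A) ‖x‖ ^ p * powW n β1 p x
      ≤ (TT lam1 R)⁻¹ * (KK (lam1 - n) * VA n * CC lam1 * TT lam1 R) :=
        mul_le_mul_right (ball_le hn _ _ _ key hR) _
    _ = ((TT lam1 R)⁻¹ * TT lam1 R) * (KK (lam1 - n) * VA n * CC lam1) := by ring
    _ ≤ _ := by rw [ENNReal.inv_mul_cancel (TT_ne_zero _ hR) (TT_ne_top _ _), one_mul]

lemma test_max {n : ℕ} (hn : 0 < n) (α A : ℝ) (h : (n:ℝ) ≤ A ∨ A < α) (x : Euc n) :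
    fracMax n α (fun x => TT (-A) ‖x‖) x = ⊤ := by
  have hnR : (0:ℝ) < n := by exact_mod_cast hn
  rcases h with h | h
  · have hR : 0 < ‖x‖ + 1 := by positivity
    have hx : x ∈ ball (0 : Euc n) (‖x‖ + 1) := by simp
    have hI : ∫⁻ y in ball (0 : Euc n) (‖x‖ + 1), TT (-A) ‖y‖ = ⊤ := by
      rw [ball_sum hn hR]
      by_contra hcon
      have h1 : KK (-A) * ∑' k : ℕ, ∫⁻ y in Ann n ((‖x‖ + 1) / 2 ^ k), TT (-A) ‖y‖ = ⊤ := by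
        rw [eq_top_iff, ← ENNReal.tsum_mul_left]
        calc ⊤ = VA n * ∑' k : ℕ, TT (-A + n) ((‖x‖ + 1) / 2 ^ k) := by
              rw [geom_top _ (by linarith) hR, ENNReal.mul_top (VA_ne_zero hn)]
          _ = ∑' k : ℕ, VA n * TT (-A + n) ((‖x‖ + 1) / 2 ^ k) := ENNReal.tsum_mul_left.symm
          _ ≤ _ := ENNReal.tsum_le_tsum fun k => ann_lower _ (ann_pos hR k)
      exact ENNReal.mul_ne_top (KK_ne_top _) hcon h1
    have h2 := le_fracMax (α := α) (g := fun x => TT (-A) ‖x‖) hR hx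
    rw [hI, ENNReal.mul_top] at h2
    · exact top_le_iff.1 h2
    · rw [vol_ball_rpow _ hR]
      exact mul_ne_zero (TT_ne_zero _ hR)
        (ENNReal.rpow_pos (pos_iff_ne_zero.2 (VV_pos n)) (VV_top n)).ne'
  · by_contra hM
    set M := fracMax n α (fun x => TT (-A) ‖x‖) x
    set c := VV n ^ (α / n - 1) * VA n with hc
    have hc0 : c ≠ 0 := mul_ne_zero
      (ENNReal.rpow_pos (pos_iff_ne_zero.2 (VV_pos n)) (VV_top n)).ne' (VA_ne_zero hn)
    have hct : c ≠ ⊤ := ENNReal.mul_ne_top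
      (ENNReal.rpow_ne_top_of_ne_zero (VV_pos n) (VV_top n)) (VA_ne_top n)
    obtain ⟨r, hr, hr0, hlt⟩ := TT_unbdd (α - A) (by linarith) (KK (-A) * M / c)
      (ENNReal.div_ne_top (ENNReal.mul_ne_top (KK_ne_top _) hM) hc0) ‖x‖
    rw [ENNReal.div_lt_iff (Or.inl hc0) (Or.inl hct)] at hlt
    refine absurd hlt (not_lt.2 ?_)
    have hx : x ∈ ball (0 : Euc n) r := by simpa using hr
    have h2 := le_fracMax (α := α) (g := fun x => TT (-A) ‖x‖) hr0 hx
    calc TT (α - A) r * c = (TT (α - n) r * VV n ^ (α / n - 1)) * (VA n * TT (-A + n) r) := by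
          rw [show α - A = (α - n) + (-A + n) by ring, ← TT_mul _ _ hr0, hc]; ring
      _ ≤ (TT (α - n) r * VV n ^ (α / n - 1)) *
          (KK (-A) * ∫⁻ x in ball (0 : Euc n) r, TT (-A) ‖x‖) :=
          mul_le_mul_right ((ann_lower _ hr0).trans
            (mul_le_mul_right (lintegral_mono_set sdiff_subset) _)) _
      _ = KK (-A) * (volume (ball (0 : Euc n) r) ^ (α / n - 1) *
          ∫⁻ x in ball (0 : Euc n) r, TT (-A) ‖x‖) := by
          rw [vol_ball_rpow _ hr0, show (n:ℝ) * (α / n - 1) = α - n by field_simp]; ring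
      _ ≤ _ := by gcongr

lemma norm_top {n : ℕ} (hn : 0 < n) (q lam2 β2 : ℝ) (hq : 0 < q) (g : Euc n → ℝ≥0∞)
    (hg : ∀ x, g x = ⊤) : lmNormE n q (phiS lam2) (powW n β2 q) g = ⊤ := by
  rw [eq_top_iff]
  unfold lmNormE
  refine le_iSup_of_le 1 (le_iSup_of_le one_pos ?_)
  have hI : ∫⁻ x in ball (0 : Euc n) 1, g x ^ q * powW n β2 q x = ⊤ := by
    rw [eq_top_iff]
    calc ⊤ = ∫⁻ x in Ann n 1, (⊤ : ℝ≥0∞) := by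
          rw [setLIntegral_const, ENNReal.top_mul]
          rw [vol_Ann one_pos]
          exact mul_ne_zero (TT_ne_zero _ one_pos) (VA_ne_zero hn)
      _ ≤ ∫⁻ x in Ann n 1, g x ^ q * powW n β2 q x := by
          apply setLIntegral_mono' (meas_Ann n 1)
          intro x hx
          have hx0 : 0 < ‖x‖ := by linarith [(mem_Ann.1 hx).2]
          have : powW n β2 q x ≠ 0 := TT_ne_zero _ hx0
          rw [hg x, ENNReal.top_rpow_of_pos hq, ENNReal.top_mul this]
      _ ≤ _ := lintegral_mono_set sdiff_subset
  have h0 : (phiS lam2 1)⁻¹ ≠ 0 := ENNReal.inv_ne_zero.2 (TT_ne_top lam2 1)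
  rw [hI, ENNReal.mul_top h0,
    ENNReal.top_rpow_of_pos (by positivity)]

lemma nec1 {n : ℕ} (hn : 0 < n) (α p q lam1 lam2 β1 β2 : ℝ) (hp : 1 < p) (hq : 0 < q)
    (hlam1 : 0 < lam1)
    (hb : ∃ C : ℝ≥0∞, C < ⊤ ∧ ∀ f : Euc n → ℝ, Measurable f →
      lmNormE n q (phiS lam2) (powW n β2 q) (fracMax n α fun x => ENNReal.ofReal |f x|) ≤
        C * lmNorm n p (phiS lam1) (powW n β1 p) f) :
    α ≤ β1 + (n - lam1) / p ∧ β1 + (n - lam1) / p < n := by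
  by_contra hcon
  have h : (n:ℝ) ≤ β1 + (n - lam1) / p ∨ β1 + (n - lam1) / p < α := by
    by_contra h
    push Not at h
    exact hcon ⟨h.2, h.1⟩
  obtain ⟨C, hC, hb⟩ := hb
  have hb := hb (fun x => ‖x‖ ^ (-(β1 + (n - lam1) / p))) (by fun_prop)
  have e : (fun x : Euc n => ENNReal.ofReal |‖x‖ ^ (-(β1 + (n - lam1) / p))|) =
      fun x => TT (-(β1 + (n - lam1) / p)) ‖x‖ := by
    ext x
    rw [abs_of_nonneg (by positivity)]; rfl
  unfold lmNorm at hb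
  rw [e, norm_top hn q lam2 β2 hq _ (test_max hn α _ h), top_le_iff] at hb
  exact ENNReal.mul_ne_top hC.ne (test_norm hn p lam1 β1 hp hlam1).ne hb

def gA (n : ℕ) (t : ℝ) : Euc n → ℝ≥0∞ := (Ann n t).indicator fun _ => 1

lemma gA_upper {n : ℕ} (p lam1 β1 : ℝ) (hp : 1 < p) (hlam1 : 0 < lam1) :
    ∃ D : ℝ≥0∞, D ≠ ⊤ ∧ ∀ t : ℝ, 0 < t → lmNormE n p (phiS lam1) (powW n β1 p) (gA n t) ≤
      D * TT (β1 + (n - lam1) / p) t := by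
  have hp0 : 0 < p := by linarith
  refine ⟨(TT (-lam1) (1 / 2) * (KK (β1 * p) * VA n)) ^ (1 / p),
    ENNReal.rpow_ne_top_of_nonneg (by positivity) (ENNReal.mul_ne_top (TT_ne_top _ _)
      (ENNReal.mul_ne_top (KK_ne_top _) (VA_ne_top n))), ?_⟩
  intro t ht
  unfold lmNormE
  refine iSup_le fun R => iSup_le fun hR => ?_
  have e : (TT (-lam1) (1 / 2) * (KK (β1 * p) * VA n)) ^ (1 / p) * TT (β1 + (n - lam1) / p) t =
      (TT (-lam1) (t * (1 / 2)) * (KK (β1 * p) * VA n * TT (β1 * p + n) t)) ^ (1 / p) := by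
    rw [TT_mul_base _ ht (by norm_num)]
    have : TT (-lam1) t * TT (-lam1) (1 / 2) * (KK (β1 * p) * VA n * TT (β1 * p + n) t) =
      (TT (-lam1) (1 / 2) * (KK (β1 * p) * VA n)) * TT (-lam1 + (β1 * p + n)) t := by
      rw [← TT_mul (-lam1) _ ht]; ring
    rw [this, ENNReal.mul_rpow_of_nonneg _ (TT _ t) (by positivity : 0 ≤ 1 / p), TT_rpow _ _ ht]
    congr 2
    field_simp; ring
  rw [e]
  apply ENNReal.rpow_le_rpow _ (by positivity)
  have e2 : ∀ x, gA n t x ^ p * powW n β1 p x = (Ann n t).indicator (fun x => TT (β1 * p) ‖x‖) x := by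
    intro x
    unfold gA
    by_cases hx : x ∈ Ann n t
    · simp [hx, powW, TT]
    · simp [hx, hp0]
  simp_rw [e2]
  rcases le_or_gt R (t / 2) with h | h
  · have : ∫⁻ x in ball (0 : Euc n) R, (Ann n t).indicator (fun x => TT (β1 * p) ‖x‖) x = 0 := by
      rw [setLIntegral_eq_zero_iff' measurableSet_ball]
      · refine Filter.Eventually.of_forall fun x hx => ?_
        rw [indicator_of_notMem]
        rw [mem_Ann]
        rw [mem_ball_zero_iff] at hx
        intro h'
        linarith [h'.2]
      · apply Measurable.aemeasurable
        apply Measurable.indicator _ (meas_Ann n t)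
        unfold TT
        fun_prop
    rw [this, mul_zero]
    exact zero_le
  · have h1 : phiS lam1 R = TT lam1 R := rfl
    rw [h1, TT_inv _ hR]
    refine mul_le_mul' (TT_le' _ (by linarith) (by positivity) (by linarith)) ?_
    refine (setLIntegral_le_lintegral _ _).trans ?_
    rw [lintegral_indicator (meas_Ann n t)]
    exact ann_upper _ ht

lemma gA_lower {n : ℕ} (hn : 0 < n) (α q lam2 β2 : ℝ) (hq : 0 < q) :
    ∃ D K : ℝ≥0∞, D ≠ 0 ∧ D ≠ ⊤ ∧ K ≠ ⊤ ∧ ∀ t : ℝ, 0 < t →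
      D * TT (α + β2 + (n - lam2) / q) t ≤
        K * lmNormE n q (phiS lam2) (powW n β2 q) (fracMax n α (gA n t)) := by
  have hnR : (0:ℝ) < n := by exact_mod_cast hn
  set c := VV n ^ (α / n - 1) * VA n with hc
  have hc0 : c ≠ 0 := mul_ne_zero
    (ENNReal.rpow_pos (pos_iff_ne_zero.2 (VV_pos n)) (VV_top n)).ne' (VA_ne_zero hn)
  have hct : c ≠ ⊤ := ENNReal.mul_ne_top
    (ENNReal.rpow_ne_top_of_ne_zero (VV_pos n) (VV_top n)) (VA_ne_top n)
  have hcq0 : c ^ q * VA n ≠ 0 := mul_ne_zero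
    (ENNReal.rpow_pos (pos_iff_ne_zero.2 hc0) hct).ne' (VA_ne_zero hn)
  have hcqt : c ^ q * VA n ≠ ⊤ := ENNReal.mul_ne_top
    (ENNReal.rpow_ne_top_of_nonneg hq.le hct) (VA_ne_top n)
  have hq1 : 0 ≤ 1 / q := by positivity
  refine ⟨(c ^ q * VA n) ^ (1 / q), KK (β2 * q) ^ (1 / q),
    (ENNReal.rpow_pos (pos_iff_ne_zero.2 hcq0) hcqt).ne',
    ENNReal.rpow_ne_top_of_nonneg hq1 hcqt,
    ENNReal.rpow_ne_top_of_nonneg hq1 (KK_ne_top _), ?_⟩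
  intro t ht
  have hM : ∀ x ∈ Ann n t, c * TT α t ≤ fracMax n α (gA n t) x := by
    intro x hx
    have hxb : x ∈ ball (0 : Euc n) t := hx.1
    refine le_trans (le_of_eq ?_) (le_fracMax ht hxb)
    have : ∫⁻ y in ball (0 : Euc n) t, gA n t y = TT n t * VA n := by
      unfold gA
      rw [lintegral_indicator_const (meas_Ann n t), one_mul,
        Measure.restrict_apply (meas_Ann n t), inter_eq_left.2 (show Ann n t ⊆ ball 0 t from sdiff_subset), vol_Ann ht]
    rw [this, vol_ball_rpow _ ht, show (n:ℝ) * (α / n - 1) = α - n by field_simp, hc]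
    have : TT α t = TT (α - n) t * TT n t := by rw [TT_mul _ _ ht]; congr 1; ring
    rw [this]; ring
  have hlow : ((phiS lam2 t)⁻¹ * ∫⁻ x in ball (0 : Euc n) t,
      fracMax n α (gA n t) x ^ q * powW n β2 q x) ^ (1 / q) ≤
      lmNormE n q (phiS lam2) (powW n β2 q) (fracMax n α (gA n t)) := by
    unfold lmNormE
    exact le_iSup_of_le t (le_iSup_of_le ht le_rfl)
  refine le_trans ?_ (mul_le_mul_right hlow _)
  rw [← ENNReal.mul_rpow_of_nonneg _ _ hq1]
  have e : (c ^ q * VA n) ^ (1 / q) * TT (α + β2 + (n - lam2) / q) t =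
      ((TT lam2 t)⁻¹ * ((c * TT α t) ^ q * (VA n * TT (β2 * q + n) t))) ^ (1 / q) := by
    rw [TT_inv _ ht, ENNReal.mul_rpow_of_nonneg c (TT α t) hq.le, TT_rpow _ _ ht]
    have : TT (-lam2) t * (c ^ q * TT (α * q) t * (VA n * TT (β2 * q + n) t)) =
        (c ^ q * VA n) * TT (-lam2 + (α * q + (β2 * q + n))) t := by
      rw [← TT_mul (-lam2) _ ht, ← TT_mul (α * q) _ ht]; ring
    rw [this, ENNReal.mul_rpow_of_nonneg _ (TT _ t) hq1, TT_rpow _ _ ht]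
    congr 2
    field_simp; ring
  rw [e]
  apply ENNReal.rpow_le_rpow _ hq1
  calc (TT lam2 t)⁻¹ * ((c * TT α t) ^ q * (VA n * TT (β2 * q + n) t))
      ≤ (TT lam2 t)⁻¹ * ((c * TT α t) ^ q * (KK (β2 * q) * ∫⁻ x in Ann n t, TT (β2 * q) ‖x‖)) :=
        mul_le_mul_right (mul_le_mul_right (ann_lower _ ht) _) _
    _ = KK (β2 * q) * ((TT lam2 t)⁻¹ * ∫⁻ x in Ann n t, (c * TT α t) ^ q * TT (β2 * q) ‖x‖) := by
        rw [lintegral_const_mul' _ _ (ENNReal.rpow_ne_top_of_nonneg hq.le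
          (ENNReal.mul_ne_top hct (TT_ne_top _ _)))]
        ring
    _ ≤ KK (β2 * q) * ((TT lam2 t)⁻¹ * ∫⁻ x in ball (0 : Euc n) t,
        fracMax n α (gA n t) x ^ q * TT (β2 * q) ‖x‖) := by
        refine mul_le_mul_right (mul_le_mul_right ?_ _) _
        refine le_trans ?_ (lintegral_mono_set (show Ann n t ⊆ ball 0 t from sdiff_subset))
        apply setLIntegral_mono' (meas_Ann n t)
        intro x hx
        gcongr
        exact hM x hx
    _ = _ := rfl

lemma TT_bdd_zero (s : ℝ) (B : ℝ≥0∞) (hB : B ≠ ⊤) (h : ∀ t : ℝ, 0 < t → TT s t ≤ B) : s = 0 := by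
  rcases lt_trichotomy s 0 with hs | hs | hs
  · obtain ⟨r, -, hr, hlt⟩ := TT_unbdd (-s) (by linarith) B hB 0
    have := h r⁻¹ (by positivity)
    have e : TT s r⁻¹ = TT (-s) r := by
      unfold TT
      rw [Real.inv_rpow hr.le, Real.rpow_neg hr.le]
    rw [e] at this
    exact absurd hlt (not_lt.2 this)
  · exact hs
  · obtain ⟨r, -, hr, hlt⟩ := TT_unbdd s hs B hB 0
    exact absurd hlt (not_lt.2 (h r hr))

lemma nec2 {n : ℕ} (hn : 0 < n) (α p q lam1 lam2 β1 β2 : ℝ) (hp : 1 < p) (hq : 0 < q)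
    (hlam1 : 0 < lam1)
    (hb : ∃ C : ℝ≥0∞, C < ⊤ ∧ ∀ f : Euc n → ℝ, Measurable f →
      lmNormE n q (phiS lam2) (powW n β2 q) (fracMax n α fun x => ENNReal.ofReal |f x|) ≤
        C * lmNorm n p (phiS lam1) (powW n β1 p) f) :
    β2 - β1 - (n - lam1) / p + (n - lam2) / q + α = 0 := by
  obtain ⟨C, hC, hb⟩ := hb
  obtain ⟨D1, hD1, h1⟩ := gA_upper (n := n) p lam1 β1 hp hlam1
  obtain ⟨D2, K, hD20, hD2, hK, h2⟩ := gA_lower hn α q lam2 β2 hq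
  apply TT_bdd_zero _ (K * (C * D1) / D2) (ENNReal.div_ne_top (ENNReal.mul_ne_top hK
    (ENNReal.mul_ne_top hC.ne hD1)) hD20)
  intro t ht
  have hb := hb ((Ann n t).indicator fun _ => 1) (measurable_const.indicator (meas_Ann n t))
  have e : (fun x : Euc n => ENNReal.ofReal |(Ann n t).indicator (fun _ => (1:ℝ)) x|) = gA n t := by
    ext x
    unfold gA
    by_cases hx : x ∈ Ann n t <;> simp [hx]
  unfold lmNorm at hb
  rw [e] at hb
  set A := β1 + (n - lam1) / p with hA
  have h3 : D2 * TT (α + β2 + (n - lam2) / q) t ≤ K * (C * (D1 * TT A t)) :=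
    (h2 t ht).trans (mul_le_mul_right (hb.trans (mul_le_mul_right (h1 t ht) _)) _)
  have h4 : β2 - β1 - (n - lam1) / p + (n - lam2) / q + α = (α + β2 + (n - lam2) / q) + (-A) := by
    rw [hA]; ring
  rw [h4, ENNReal.le_div_iff_mul_le (Or.inl hD20) (Or.inl hD2), ← TT_mul _ _ ht]
  calc TT (α + β2 + (n - lam2) / q) t * TT (-A) t * D2
      = D2 * TT (α + β2 + (n - lam2) / q) t * TT (-A) t := by ring
    _ ≤ K * (C * (D1 * TT A t)) * TT (-A) t := by gcongr
    _ = K * (C * D1) * (TT A t * TT (-A) t) := by ring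
    _ = K * (C * D1) := by rw [TT_mul _ _ ht, add_neg_cancel, TT_zero, mul_one]

theorem stmt16 (n : ℕ) (hn : 0 < n) (α γ : ℝ) (hα : 0 < α) (hαn : α < n)
    (hγ : 0 ≤ γ) (hγα : γ ≤ α)
    (p q : ℝ) (hp : 1 < p) (hpn : p < n / γ) (hpq : 1 / p - 1 / q = γ / n)
    (lam1 lam2 : ℝ) (hlam1 : 0 < lam1) (hlam2 : 0 < lam2) (β1 β2 : ℝ) :
    (∃ C : ℝ≥0∞, C < ⊤ ∧ ∀ f : Euc n → ℝ, Measurable f →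
      lmNormE n q (phiS lam2) (powW n β2 q) (fracMax n α fun x => ENNReal.ofReal |f x|) ≤
        C * lmNorm n p (phiS lam1) (powW n β1 p) f) ↔
    (β2 - β1 - (n - lam1) / p + (n - lam2) / q + α = 0 ∧
      α ≤ β1 + (n - lam1) / p ∧ β1 + (n - lam1) / p < n) := by
  have hnR : (0:ℝ) < n := by exact_mod_cast hn
  have hp0 : 0 < p := by linarith
  have hγ0 : 0 < γ := by
    rcases hγ.eq_or_lt with h | h
    · rw [← h, _root_.div_zero] at hpn
      linarith
    · exact h
  have hq0 : 0 < 1 / q := by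
    have h1 : γ / n < 1 / p := by
      rw [lt_div_iff₀ hγ0] at hpn
      rw [div_lt_div_iff₀ hnR hp0]
      linarith
    linarith
  have hq : 0 < q := one_div_pos.1 hq0
  have hq1 : 1 ≤ q := by
    have h1 : 0 ≤ γ / n := by positivity
    have h2 : 1 / q ≤ 1 / p := by linarith
    have h3 := (one_div_le_one_div hq hp0).1 h2
    linarith
  constructor
  · intro hb
    exact ⟨nec2 hn α p q lam1 lam2 β1 β2 hp hq hlam1 hb,
      nec1 hn α p q lam1 lam2 β1 β2 hp hq hlam1 hb⟩
  · rintro ⟨hrel, hA1, hA⟩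
    obtain ⟨C, hC, h⟩ := sufficiency hn α γ hγ hγα p q lam1 lam2 β1 β2 hlam2 hp hq1 hpq hrel hA1 hA
    refine ⟨C, hC, fun f hf => ?_⟩
    exact h (fun x => ENNReal.ofReal |f x|) (by fun_prop)
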